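/- Let A be a directed-complete generalized ultrametric semilattice with distance set P, let F : A → A be strictly contracting, and let x ∈ A be a fixed point of F (F(x) = x). Then x is the least upper bound in (A, ⊑) of the set {a ∈ A : a ⊑ F(a)} of all post-fixed points of F. -/

import Mathlib

/-- A generalized ultrametric semilattice over a meet-semilattice `A`
(with induced order `a ⊑ b ↔ a ⊓ b = a`, i.e. the `≤` of `SemilatticeInf`)
and a pointed partially ordered distance set `P` with least element `⊥`. -/
structure GUSemilattice (A : Type*) (P : Type*) [SemilatticeInf A] [PartialOrder P] [OrderBot P] where
  d : A → A → P
  d_eq_bot_iff : ∀ a₁ a₂ : A, d a₁ a₂ = ⊥ ↔ a₁ = a₂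
  d_symm : ∀ a₁ a₂ : A, d a₁ a₂ = d a₂ a₁
  d_ultra : ∀ (a₁ a₂ a₃ : A) (p : P), d a₁ a₂ ≤ p → d a₂ a₃ ≤ p → d a₁ a₃ ≤ p
  inf_le_inf_of_d_le : ∀ a₁ a₂ a₃ : A, d a₁ a₂ ≤ d a₁ a₃ → a₁ ⊓ a₃ ≤ a₁ ⊓ a₂
  d_inf_inf_le : ∀ a₁ a₂ a₃ : A, d (a₁ ⊓ a₂) (a₁ ⊓ a₃) ≤ d a₂ a₃

variable {A P : Type*} [SemilatticeInf A] [PartialOrder P] [OrderBot P]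

/-- `F` is contracting. -/
def GUSemilattice.Contracting (S : GUSemilattice A P) (F : A → A) : Prop :=
  ∀ a₁ a₂ : A, S.d (F a₁) (F a₂) ≤ S.d a₁ a₂

/-- `F` is strictly contracting. -/
def GUSemilattice.StrictlyContracting (S : GUSemilattice A P) (F : A → A) : Prop :=
  ∀ a₁ a₂ : A, a₁ ≠ a₂ → S.d (F a₁) (F a₂) < S.d a₁ a₂

/-- `F` is strictly contracting on orbits. -/
def GUSemilattice.StrictlyContractingOnOrbits (S : GUSemilattice A P) (F : A → A) : Prop :=
  ∀ a : A, a ≠ F a → S.d (F a) (F (F a)) < S.d a (F a)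

/-- A ball in the generalized ultrametric space associated with `S`. -/
def GUSemilattice.IsBall (S : GUSemilattice A P) (B : Set A) : Prop :=
  ∃ (a : A) (p : P), B = {x : A | S.d x a ≤ p}

/-- Spherical completeness: every nonempty chain of balls has nonempty intersection. -/
def GUSemilattice.SphericallyComplete (S : GUSemilattice A P) : Prop :=
  ∀ C : Set (Set A), C.Nonempty → IsChain (· ⊆ ·) C → (∀ B ∈ C, S.IsBall B) → (⋂₀ C).Nonempty

/-- Directed-completeness: every nonempty directed subset has a least upper bound. -/
def DirectedComplete (A : Type*) [Preorder A] : Prop :=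
  ∀ D : Set A, D.Nonempty → DirectedOn (· ≤ ·) D → ∃ s : A, IsLUB D s

/-!
Least upper bounds of post-fixed points of a contracting `F` are again post-fixed, so by directed
completeness and Zorn's lemma every post-fixed point lies below a maximal one. If `b` is
post-fixed, then `F b ⊓ F (F b)` is post-fixed and above `b`, so a maximal `b` equals
`F b ⊓ F (F b)`. Then `d (F b) b = d (F b) (F b ⊓ F (F b)) ≤ d (F b) (F (F b))`, which strict
contraction on orbits allows only if `F b = b`. Thus every post-fixed point lies below a fixed
point, and strict contraction makes the fixed point unique.
-/

namespace GUSemilattice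

theorem d_self (S : GUSemilattice A P) (a : A) : S.d a a = ⊥ :=
  (S.d_eq_bot_iff a a).2 rfl

theorem d_inf_right_le (S : GUSemilattice A P) (a b : A) : S.d a (a ⊓ b) ≤ S.d a b := by
  simpa only [inf_idem] using S.d_inf_inf_le a a b

section

variable {S : GUSemilattice A P} {F : A → A}

theorem StrictlyContracting.contracting (hF : S.StrictlyContracting F) : S.Contracting F := by
  intro a b
  obtain rfl | hab := eq_or_ne a b
  · exact (S.d_self (F a)).trans_le bot_le
  · exact (hF a b hab).le

theorem StrictlyContracting.strictlyContractingOnOrbits (hF : S.StrictlyContracting F) :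
    S.StrictlyContractingOnOrbits F :=
  fun a ha => hF a (F a) ha

theorem StrictlyContracting.eq_of_isFixedPt (hF : S.StrictlyContracting F) {x y : A}
    (hx : Function.IsFixedPt F x) (hy : Function.IsFixedPt F y) : x = y := by
  by_contra hxy
  have hlt : S.d (F x) (F y) < S.d x y := hF x y hxy
  rw [hx.eq, hy.eq] at hlt
  exact hlt.false

theorem Contracting.le_map_of_isLUB (hF : S.Contracting F) {D : Set A} {s : A}
    (hD : D ⊆ {a | a ≤ F a}) (hs : IsLUB D s) : s ≤ F s := by
  refine hs.2 fun c hc => ?_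
  have hd_c : S.d c (c ⊓ F s) ≤ S.d s c :=
    calc S.d c (c ⊓ F s) = S.d (c ⊓ F c) (c ⊓ F s) := by rw [inf_eq_left.2 (hD hc)]
      _ ≤ S.d (F c) (F s) := S.d_inf_inf_le c (F c) (F s)
      _ ≤ S.d c s := hF c s
      _ = S.d s c := S.d_symm c s
  have hd_s : S.d s (c ⊓ F s) ≤ S.d s c := S.d_ultra s c (c ⊓ F s) (S.d s c) le_rfl hd_c
  calc c = s ⊓ c := (inf_eq_right.2 (hs.1 hc)).symm
    _ ≤ s ⊓ (c ⊓ F s) := S.inf_le_inf_of_d_le s (c ⊓ F s) c hd_s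
    _ ≤ F s := inf_le_right.trans inf_le_right

theorem Contracting.inf_map_le_map_inf_map (hF : S.Contracting F) (a : A) :
    a ⊓ F a ≤ F (a ⊓ F a) := by
  have hd : S.d (F a) (F (a ⊓ F a)) ≤ S.d (F a) a :=
    calc S.d (F a) (F (a ⊓ F a)) ≤ S.d a (a ⊓ F a) := hF a (a ⊓ F a)
      _ ≤ S.d a (F a) := S.d_inf_right_le a (F a)
      _ = S.d (F a) a := S.d_symm a (F a)
  calc a ⊓ F a = F a ⊓ a := inf_comm a (F a)
    _ ≤ F a ⊓ F (a ⊓ F a) := S.inf_le_inf_of_d_le (F a) (F (a ⊓ F a)) a hd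
    _ ≤ F (a ⊓ F a) := inf_le_right

theorem Contracting.le_map_inf_map_map (hF : S.Contracting F) {a : A} (ha : a ≤ F a) :
    a ≤ F a ⊓ F (F a) := by
  have hd : S.d (F a) (F (F a)) ≤ S.d (F a) a := (hF a (F a)).trans_eq (S.d_symm a (F a))
  calc a = F a ⊓ a := (inf_eq_right.2 ha).symm
    _ ≤ F a ⊓ F (F a) := S.inf_le_inf_of_d_le (F a) (F (F a)) a hd

theorem Contracting.isFixedPt_of_maximal (hF : S.Contracting F)
    (hF_orbits : S.StrictlyContractingOnOrbits F) {b : A} (hb : Maximal (fun a => a ≤ F a) b) :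
    Function.IsFixedPt F b := by
  have hb_eq : b = F b ⊓ F (F b) :=
    hb.eq_of_le (hF.inf_map_le_map_inf_map (F b)) (hF.le_map_inf_map_map hb.prop)
  have hd : S.d b (F b) ≤ S.d (F b) (F (F b)) :=
    calc S.d b (F b) = S.d (F b) b := S.d_symm b (F b)
      _ = S.d (F b) (F b ⊓ F (F b)) := congrArg (S.d (F b)) hb_eq
      _ ≤ S.d (F b) (F (F b)) := S.d_inf_right_le (F b) (F (F b))
  by_contra hne
  exact (hF_orbits b (Ne.symm hne)).not_ge hd

theorem Contracting.exists_le_isFixedPt (hF : S.Contracting F) (hdc : DirectedComplete A)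
    (hF_orbits : S.StrictlyContractingOnOrbits F) {a : A} (ha : a ≤ F a) :
    ∃ b, a ≤ b ∧ Function.IsFixedPt F b := by
  have chain_bddAbove : ∀ C ⊆ {a | a ≤ F a}, IsChain (· ≤ ·) C → ∀ c ∈ C,
      ∃ s ∈ {a | a ≤ F a}, ∀ z ∈ C, z ≤ s := by
    intro C hC hchain c hc
    obtain ⟨s, hs⟩ := hdc C ⟨c, hc⟩ hchain.directedOn
    exact ⟨s, hF.le_map_of_isLUB hC hs, hs.1⟩
  obtain ⟨b, hab, hb⟩ := zorn_le_nonempty₀ {a | a ≤ F a} chain_bddAbove a ha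
  exact ⟨b, hab, hF.isFixedPt_of_maximal hF_orbits hb⟩

end

end GUSemilattice

theorem fixedPoint_isLUB_postFixed_points_general
    (S : GUSemilattice A P) (hdc : DirectedComplete A)
    (F : A → A) (hF : S.Contracting F) (hF_orbits : S.StrictlyContractingOnOrbits F)
    (x : A) (hx : IsGreatest (Function.fixedPoints F) x) :
    IsLUB {a : A | a ≤ F a} x := by
  refine IsGreatest.isLUB ⟨hx.1.ge, fun a ha => ?_⟩
  obtain ⟨b, hab, hb⟩ := hF.exists_le_isFixedPt hdc hF_orbits ha
  exact hab.trans (hx.2 hb)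

theorem fixedPoint_isLUB_postFixed_points
    (S : GUSemilattice A P) (hdc : DirectedComplete A)
    (F : A → A) (hF : S.StrictlyContracting F)
    (x : A) (hx : F x = x) :
    IsLUB {a : A | a ≤ F a} x :=
  fixedPoint_isLUB_postFixed_points_general S hdc F hF.contracting hF.strictlyContractingOnOrbits x
    ⟨hx, fun _ hy => (hF.eq_of_isFixedPt hy hx).le⟩
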